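/- Let B ⊆ ℝⁿ be a convex body with nonempty interior satisfying B = −B, let S be a support set of B, and let x ∈ relint(S). Then R({x,−x},B) = 1 and the set A = (S − x) ∩ (−S + x) satisfies A ⊆ cc({x,−x},B), 0 ∈ relint(A), and dim(A) = dim(S); consequently dim(cc({x,−x},B)) ≥ dim(S). -/

import Mathlib

/-!
Let `h = h(B,u)` where `u` defines `S`; since `B = -B` has interior points, `h > 0`. If
`x, -x ∈ ρB + y`, pairing `x - y` and `x + y`, both in `ρB`, with `u` and adding gives
`2h ≤ 2ρh`, so `ρ ≥ 1`; as `x, -x ∈ B`, the circumradius is `1`. A point of `A` is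
`y = s - x = x - t` with `s, t ∈ S`, hence `x - y = t` and `-x - y = -s` lie in `B`, that is,
`y` is a circumcenter. Finally, with `T` the direction of the affine span of `S`, the set `A` is
contained in `T` and, as `x` is relatively interior to `S`, contains a ball of `T` around `0`.
Thus `T` is the linear span of `A` and `0` is relatively interior to `A`.
-/

open Set Pointwise RealInnerProductSpace

/-- A convex body: a nonempty compact convex set. -/
def IsConvexBody {n : ℕ} (K : Set (EuclideanSpace ℝ (Fin n))) : Prop :=
  K.Nonempty ∧ IsCompact K ∧ Convex ℝ K

/-- The circumradius `R(A,C)` of `A` with respect to the gauge body `C`: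
`inf {ρ ≥ 0 : ∃ x, A ⊆ ρC + x}`. -/
noncomputable def circR {n : ℕ} (A C : Set (EuclideanSpace ℝ (Fin n))) : ℝ :=
  sInf {ρ : ℝ | 0 ≤ ρ ∧ ∃ x, A ⊆ ρ • C + {x}}

/-- The set of circumcenters (Chebyshev set) `cc(A,C) = {x : A ⊆ R(A,C)·C + x}`. -/
noncomputable def ccSet {n : ℕ} (A C : Set (EuclideanSpace ℝ (Fin n))) :
    Set (EuclideanSpace ℝ (Fin n)) :=
  {x | A ⊆ circR A C • C + {x}}

/-- The support function `h(K,u) = sup {⟨y,u⟩ : y ∈ K}`. -/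
noncomputable def suppFn {n : ℕ} (K : Set (EuclideanSpace ℝ (Fin n)))
    (u : EuclideanSpace ℝ (Fin n)) : ℝ :=
  sSup ((fun y => ⟪y, u⟫) '' K)

/-- The normal cone `N(K,x) = {u : h(K,u) = ⟨x,u⟩}` of `K` at `x`. -/
noncomputable def normalCone {n : ℕ} (K : Set (EuclideanSpace ℝ (Fin n)))
    (x : EuclideanSpace ℝ (Fin n)) : Set (EuclideanSpace ℝ (Fin n)) :=
  {u | suppFn K u = ⟪x, u⟫}

/-- The dimension of the affine span of a set. -/
noncomputable def adim {n : ℕ} (A : Set (EuclideanSpace ℝ (Fin n))) : ℕ :=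
  Module.finrank ℝ (affineSpan ℝ A).direction

/-- `S` is a support set of `K`: `S = {x ∈ K : ⟨x,u⟩ = h(K,u)}` for some `u ≠ 0`. -/
noncomputable def IsSupportSet {n : ℕ} (K S : Set (EuclideanSpace ℝ (Fin n))) : Prop :=
  ∃ u : EuclideanSpace ℝ (Fin n), u ≠ 0 ∧ S = {x ∈ K | ⟪x, u⟫ = suppFn K u}

lemma inner_le_suppFn {n : ℕ} {K : Set (EuclideanSpace ℝ (Fin n))} (hK : IsCompact K)
    {y : EuclideanSpace ℝ (Fin n)} (hy : y ∈ K) (u : EuclideanSpace ℝ (Fin n)) :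
    ⟪y, u⟫ ≤ suppFn K u := by
  have hc : Continuous fun y : EuclideanSpace ℝ (Fin n) => ⟪y, u⟫ := by fun_prop
  exact le_csSup (hK.image hc).bddAbove ⟨y, hy, rfl⟩

/-- If `c` is interior to `B`, then `c + t • u ∈ B` for some `t > 0`; adding its pairing with `u`
to that of `-c ∈ B` gives `2 * suppFn B u ≥ t * ⟪u, u⟫`. -/
lemma suppFn_pos {n : ℕ} {B : Set (EuclideanSpace ℝ (Fin n))} (hB : IsCompact B)
    (hBsymm : B = -B) (hBint : (interior B).Nonempty) {u : EuclideanSpace ℝ (Fin n)}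
    (hu : u ≠ 0) : 0 < suppFn B u := by
  obtain ⟨c, hc⟩ := hBint
  have ht : Filter.Tendsto (fun t : ℝ => c + t • u) (nhdsWithin 0 (Ioi 0)) (nhds c) := by
    have : Continuous fun t : ℝ => c + t • u := by fun_prop
    simpa using (this.tendsto 0).mono_left nhdsWithin_le_nhds
  obtain ⟨t, htB, ht0⟩ :=
    ((ht.eventually (mem_interior_iff_mem_nhds.1 hc)).and self_mem_nhdsWithin).exists
  have ht0 : 0 < t := ht0
  have hcB : -c ∈ B := by
    rw [hBsymm]
    simpa using interior_subset hc
  have h1 := inner_le_suppFn hB htB u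
  have h2 := inner_le_suppFn hB hcB u
  rw [inner_add_left, real_inner_smul_left] at h1
  rw [inner_neg_left] at h2
  have h3 : 0 < t * ⟪u, u⟫ := mul_pos ht0 (real_inner_self_pos.2 hu)
  linarith

/-- Relative interiority in terms of vectors of the direction space, avoiding the subtype topology
on the affine span. -/
lemma exists_ball_direction {n : ℕ} {S : Set (EuclideanSpace ℝ (Fin n))}
    {x : EuclideanSpace ℝ (Fin n)} (hx : x ∈ intrinsicInterior ℝ S) :
    ∃ ε > 0, ∀ v ∈ (affineSpan ℝ S).direction, ‖v‖ < ε → x + v ∈ S := by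
  obtain ⟨y, hy, rfl⟩ := mem_intrinsicInterior.1 hx
  obtain ⟨ε, hε, hb⟩ := Metric.mem_nhds_iff.1 (mem_interior_iff_mem_nhds.1 hy)
  refine ⟨ε, hε, fun v hv hvε => ?_⟩
  have hm : (y : EuclideanSpace ℝ (Fin n)) + v ∈ affineSpan ℝ S := by
    have := AffineSubspace.vadd_mem_of_mem_direction hv y.2
    rwa [vadd_eq_add, add_comm] at this
  have : (⟨_, hm⟩ : affineSpan ℝ S) ∈ Metric.ball y ε := by
    rw [Metric.mem_ball, Subtype.dist_eq, dist_eq_norm]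
    simpa using hvε
  exact hb this

/-- A set between a ball of `T` around `0` and `T` itself spans `T`. -/
lemma vectorSpan_eq_of_ball {n : ℕ} {A : Set (EuclideanSpace ℝ (Fin n))}
    {T : Submodule ℝ (EuclideanSpace ℝ (Fin n))} (hAT : A ⊆ T) {ε : ℝ} (hε : 0 < ε)
    (hTA : ∀ v ∈ T, ‖v‖ < ε → v ∈ A) : vectorSpan ℝ A = T := by
  have h0 : (0 : EuclideanSpace ℝ (Fin n)) ∈ A := hTA 0 T.zero_mem (by simpa using hε)
  rw [vectorSpan_eq_span_vsub_set_right ℝ h0]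
  simp only [vsub_eq_sub, sub_zero, image_id']
  refine le_antisymm (Submodule.span_le.2 hAT) fun v hv => ?_
  have hpos : 0 < ‖v‖ + 1 := by positivity
  have hc : 0 < ε / (‖v‖ + 1) := by positivity
  have hmem : (ε / (‖v‖ + 1)) • v ∈ A := by
    refine hTA _ (T.smul_mem _ hv) ?_
    rw [norm_smul, Real.norm_of_nonneg hc.le, div_mul_eq_mul_div, div_lt_iff₀ hpos]
    nlinarith
  exact (Submodule.smul_mem_iff _ hc.ne').1 (Submodule.subset_span hmem)

lemma zero_mem_intrinsicInterior_of_ball {n : ℕ} {A : Set (EuclideanSpace ℝ (Fin n))}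
    {T : Submodule ℝ (EuclideanSpace ℝ (Fin n))} (hAT : A ⊆ T) {ε : ℝ} (hε : 0 < ε)
    (hTA : ∀ v ∈ T, ‖v‖ < ε → v ∈ A) : 0 ∈ intrinsicInterior ℝ A := by
  have h0 : (0 : EuclideanSpace ℝ (Fin n)) ∈ A := hTA 0 T.zero_mem (by simpa using hε)
  refine mem_intrinsicInterior.2 ⟨⟨0, subset_affineSpan ℝ A h0⟩, ?_, rfl⟩
  refine mem_interior_iff_mem_nhds.2 (Metric.mem_nhds_iff.2 ⟨ε, hε, fun y hy => ?_⟩)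
  rw [Metric.mem_ball, Subtype.dist_eq, dist_eq_norm, sub_zero] at hy
  refine hTA _ ?_ hy
  have := AffineSubspace.vsub_mem_direction y.2 (subset_affineSpan ℝ A h0)
  rw [direction_affineSpan, vectorSpan_eq_of_ball hAT hε hTA] at this
  simpa using this

lemma mem_smul_add_singleton {n : ℕ} {B : Set (EuclideanSpace ℝ (Fin n))} {ρ : ℝ}
    {y z : EuclideanSpace ℝ (Fin n)} : z ∈ ρ • B + {y} ↔ ∃ b ∈ B, ρ • b = z - y := by
  simp only [add_singleton, mem_image, mem_smul_set, eq_sub_iff_add_eq]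
  aesop

/-- For `x` in the relative interior of a support set `S` of `B = −B`, one has
`R({x,−x},B) = 1`, and `A = (S − x) ∩ (−S + x)` satisfies `A ⊆ cc({x,−x},B)`,
`0 ∈ relint(A)` and `dim(A) = dim(S)`; consequently `dim(cc({x,−x},B)) ≥ dim(S)`. -/
theorem relint_support_set_circumcenters {n : ℕ}
    (B S : Set (EuclideanSpace ℝ (Fin n))) (hB : IsConvexBody B)
    (hBsymm : B = -B) (hBint : (interior B).Nonempty)
    (hS : IsSupportSet B S) (x : EuclideanSpace ℝ (Fin n))
    (hx : x ∈ intrinsicInterior ℝ S) :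
    circR {x, -x} B = 1 ∧
    (S - {x}) ∩ ({x} - S) ⊆ ccSet {x, -x} B ∧
    0 ∈ intrinsicInterior ℝ ((S - {x}) ∩ ({x} - S)) ∧
    adim ((S - {x}) ∩ ({x} - S)) = adim S ∧
    adim S ≤ adim (ccSet {x, -x} B) := by
  obtain ⟨hne, hcpt, hconv⟩ := hB
  obtain ⟨ε, hε, hball⟩ := exists_ball_direction hx
  have hxS : x ∈ S := intrinsicInterior_subset hx
  have hneg : ∀ b ∈ B, -b ∈ B := fun b hb => by
    rw [hBsymm]
    simpa using hb
  have hSB : S ⊆ B := by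
    obtain ⟨u, -, rfl⟩ := hS
    exact sep_subset _ _
  have hR : circR {x, -x} B = 1 := by
    obtain ⟨u, hu, rfl⟩ := hS
    have hpos := suppFn_pos hcpt hBsymm hBint hu
    refine IsLeast.csInf_eq ⟨⟨zero_le_one, 0, ?_⟩, ?_⟩
    · simpa [insert_subset_iff] using ⟨hxS.1, hneg x hxS.1⟩
    · rintro ρ ⟨hρ, y, hy⟩
      obtain ⟨b, hb, hbe⟩ := mem_smul_add_singleton.1 (hy (mem_insert x _))
      obtain ⟨c, hc, hce⟩ :=
        mem_smul_add_singleton.1 (hy (mem_insert_of_mem x (mem_singleton (-x))))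
      have h1 := mul_le_mul_of_nonneg_left (inner_le_suppFn hcpt hb u) hρ
      have h2 := mul_le_mul_of_nonneg_left (inner_le_suppFn hcpt (hneg c hc) u) hρ
      rw [inner_neg_left, mul_neg] at h2
      rw [← real_inner_smul_left] at h1 h2
      rw [hbe, inner_sub_left] at h1
      rw [hce, inner_sub_left, inner_neg_left] at h2
      have h3 := hxS.2
      exact le_of_mul_le_mul_right (by linarith) hpos
  have hcc : (S - {x}) ∩ ({x} - S) ⊆ ccSet {x, -x} B := by
    rintro y ⟨hy1, hy2⟩
    simp only [sub_singleton, singleton_sub, mem_image] at hy1 hy2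
    obtain ⟨s, hs, hsy⟩ := hy1
    obtain ⟨s', hs', hsy'⟩ := hy2
    change {x, -x} ⊆ circR {x, -x} B • B + {y}
    rw [hR]
    rintro z (rfl | rfl)
    · exact mem_smul_add_singleton.2 ⟨s', hSB hs', by rw [← hsy']; module⟩
    · exact mem_smul_add_singleton.2 ⟨-s, hneg s (hSB hs), by rw [← hsy]; module⟩
  have hAT : (S - {x}) ∩ ({x} - S) ⊆ ((affineSpan ℝ S).direction : Set _) := by
    rintro y ⟨hy1, -⟩
    simp only [sub_singleton, mem_image] at hy1
    obtain ⟨s, hs, rfl⟩ := hy1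
    exact AffineSubspace.vsub_mem_direction (subset_affineSpan ℝ S hs)
      (subset_affineSpan ℝ S hxS)
  have hTA : ∀ v ∈ (affineSpan ℝ S).direction, ‖v‖ < ε → v ∈ (S - {x}) ∩ ({x} - S) := by
    intro v hv hvε
    simp only [sub_singleton, singleton_sub, mem_inter_iff, mem_image]
    exact ⟨⟨x + v, hball v hv hvε, by module⟩,
      ⟨x + -v, hball (-v) (Submodule.neg_mem _ hv) (by rwa [norm_neg]), by module⟩⟩
  have hdim : adim ((S - {x}) ∩ ({x} - S)) = adim S := by
    unfold adim
    rw [direction_affineSpan, vectorSpan_eq_of_ball hAT hε hTA]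
  refine ⟨hR, hcc, zero_mem_intrinsicInterior_of_ball hAT hε hTA, hdim, ?_⟩
  rw [← hdim]
  exact Submodule.finrank_mono (AffineSubspace.direction_le (affineSpan_mono ℝ hcc))
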